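/- Special decomposition of positive braids: for every n ≥ 1 and every braid β in the positive braid monoid B_n^+ (the submonoid of B_∞ generated by σ₁, …, σ_{n−1}), there exists a unique n-tuple (β₁, …, βₙ) of special braids satisfying β = β₁ · sh(β₂) ⋯ sh^{n−1}(βₙ). -/

import Mathlib

/-- The braid relations on generators indexed by `ℕ` (generator `i` stands for
the Artin generator `σ_{i+1}` of the paper). -/
def braidRels : Set (FreeGroup ℕ) :=
  {r | (∃ i j : ℕ, i + 2 ≤ j ∧
          r = .of i * .of j * (.of i)⁻¹ * (.of j)⁻¹) ∨
       (∃ i : ℕ,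
          r = .of i * .of (i + 1) * .of i *
              (.of (i + 1) * .of i * .of (i + 1))⁻¹)}

/-- The braid group on infinitely many strands. -/
abbrev Binf : Type := PresentedGroup braidRels

/-- `σ i` is the Artin generator `σ_{i+1}` of the paper (0-indexed). -/
def σ (i : ℕ) : Binf := PresentedGroup.of i

lemma mk_rel_eq_one {r : FreeGroup ℕ} (h : r ∈ braidRels) :
    PresentedGroup.mk braidRels r = 1 :=
  (QuotientGroup.eq_one_iff r).mpr (Subgroup.subset_normalClosure h)

lemma shift_lift_eq_one :
    ∀ r ∈ braidRels, FreeGroup.lift (fun n => σ (n + 1)) r = 1 := by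
  intro r hr
  have key : ∀ s ∈ braidRels, FreeGroup.lift (fun n => σ (n + 1)) s
      = PresentedGroup.mk braidRels (FreeGroup.map (· + 1) s) := by
    intro s _
    have : (FreeGroup.lift (fun n => σ (n + 1)) : FreeGroup ℕ →* Binf)
        = (PresentedGroup.mk braidRels).comp (FreeGroup.map (· + 1)) := by
      apply FreeGroup.ext_hom
      intro x
      simp [σ, PresentedGroup.of]
    rw [this]; rfl
  rw [key r hr]
  apply mk_rel_eq_one
  rcases hr with ⟨i, j, hij, rfl⟩ | ⟨i, rfl⟩
  · exact Or.inl ⟨i + 1, j + 1, by omega, by simp⟩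
  · exact Or.inr ⟨i + 1, by simp⟩

/-- The shift endomorphism of the braid group, mapping `σ i` to `σ (i+1)`. -/
def sh : Binf →* Binf := PresentedGroup.toGroup shift_lift_eq_one

@[simp] lemma sh_σ (i : ℕ) : sh (σ i) = σ (i + 1) :=
  PresentedGroup.toGroup.of shift_lift_eq_one

/-- The shifted-conjugation (selfdistributive) operation on `Binf`:
`β₁ ▷ β₂ = β₁ · sh β₂ · σ₁ · (sh β₁)⁻¹`. -/
def sc (β₁ β₂ : Binf) : Binf := β₁ * sh β₂ * σ 0 * (sh β₁)⁻¹

/-- The set of special braids: the smallest subset of `Binf` containing the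
unit braid and closed under the shifted-conjugation operation `sc`. -/
def Special : Set Binf :=
  {x | ∀ P : Binf → Prop, P 1 → (∀ a b, P a → P b → P (sc a b)) → P x}

/-- The shifted product `∏^sh(β₁, …, βₙ) = β₁ · sh β₂ ⋯ sh^{n-1} βₙ`. -/
def shProd : List Binf → Binf
  | [] => 1
  | a :: t => a * sh (shProd t)

/-- The positive braid monoid `B_n⁺`: the submonoid of `Binf` generated by
the paper's `σ₁, …, σ_{n-1}` (our `σ 0, …, σ (n-2)`). -/
def BfinPos (n : ℕ) : Submonoid Binf := Submonoid.closure (σ '' {i | i + 2 ≤ n})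

/-- Coordinates: a pair of positive rationals. -/
structure Pt where
  x : ℚ
  y : ℚ
  hx : 0 < x
  hy : 0 < y

lemma Pt.ext' {p q : Pt} (h1 : p.x = q.x) (h2 : p.y = q.y) : p = q := by
  cases p; cases q; simp only at h1 h2; subst h1; subst h2; rfl

/-- First output of the (detropicalized) Dynnikov action of `σ`. -/
def dA (p q : Pt) : Pt where
  x := p.x * (1 + p.y) + p.y * q.x
  y := q.y * p.y * q.x / (p.y * q.x + p.x * (1 + p.y) * (1 + q.y))
  hx := by have := p.hx; have := p.hy; have := q.hx; positivity
  hy := by have := p.hx; have := p.hy; have := q.hx; have := q.hy; positivity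

/-- Second output of the action of `σ`. -/
def dB (p q : Pt) : Pt where
  x := p.x * q.y * q.x / (q.x + p.x * (1 + q.y))
  y := (p.y * q.x + p.x * (1 + p.y) * (1 + q.y)) / q.x
  hx := by have := p.hx; have := p.hy; have := q.hx; have := q.hy; positivity
  hy := by have := p.hx; have := p.hy; have := q.hx; have := q.hy; positivity

/-- First output of the inverse action. -/
def eA (p q : Pt) : Pt where
  x := p.x * q.x / ((1 + p.y) * q.x + p.x * p.y)
  y := q.y * p.x * p.y / (p.x * p.y + q.x * (1 + p.y) * (1 + q.y))
  hx := by have := p.hx; have := p.hy; have := q.hx; have := q.hy; positivity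
  hy := by have := p.hx; have := p.hy; have := q.hx; have := q.hy; positivity

/-- Second output of the inverse action. -/
def eB (p q : Pt) : Pt where
  x := (p.x + q.x * (1 + q.y)) / q.y
  y := (p.x * p.y + q.x * (1 + p.y) * (1 + q.y)) / p.x
  hx := by have := p.hx; have := p.hy; have := q.hx; have := q.hy; positivity
  hy := by have := p.hx; have := p.hy; have := q.hx; have := q.hy; positivity

lemma eA_d (p q : Pt) : eA (dA p q) (dB p q) = p := by
  obtain ⟨a, b, ha, hb⟩ := p
  obtain ⟨c, d, hc, hd⟩ := q
  apply Pt.ext' <;> simp only [dA, dB, eA] <;> field_simp <;> ring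
lemma eB_d (p q : Pt) : eB (dA p q) (dB p q) = q := by
  obtain ⟨a, b, ha, hb⟩ := p
  obtain ⟨c, d, hc, hd⟩ := q
  apply Pt.ext' <;> simp only [dA, dB, eB] <;> field_simp <;> ring
lemma dA_e (p q : Pt) : dA (eA p q) (eB p q) = p := by
  obtain ⟨a, b, ha, hb⟩ := p
  obtain ⟨c, d, hc, hd⟩ := q
  apply Pt.ext' <;> simp only [dA, eB, eA] <;> field_simp <;> ring
lemma dB_e (p q : Pt) : dB (eA p q) (eB p q) = q := by
  obtain ⟨a, b, ha, hb⟩ := p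
  obtain ⟨c, d, hc, hd⟩ := q
  apply Pt.ext' <;> simp only [eA, dB, eB] <;> field_simp <;> ring

lemma br1 (p q r : Pt) : dA (dA p q) (dA (dB p q) r) = dA p (dA q r) := by
  obtain ⟨a, b, ha, hb⟩ := p
  obtain ⟨c, d, hc, hd⟩ := q
  obtain ⟨e, f, he, hf⟩ := r
  apply Pt.ext' <;> simp only [dA, dB] <;> field_simp <;> ring
lemma br3 (p q r : Pt) : dB (dB p q) r = dB (dB p (dA q r)) (dB q r) := by
  obtain ⟨a, b, ha, hb⟩ := p
  obtain ⟨c, d, hc, hd⟩ := q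
  obtain ⟨e, f, he, hf⟩ := r
  apply Pt.ext' <;> simp only [dA, dB] <;> field_simp <;> ring

lemma dy (p q : Pt) : (dA p q).y * (dB p q).y = p.y * q.y := by
  obtain ⟨a, b, ha, hb⟩ := p
  obtain ⟨c, d, hc, hd⟩ := q
  simp only [dA, dB]; field_simp
lemma br2xL (p q r : Pt) : (dB (dA p q) (dA (dB p q) r)).x =
    r.y * r.x * (p.x * (1 + p.y) + p.y * q.x) / (r.x + q.x * (1 + r.y)) := by
  have hx : (dA (dB p q) r).x = (p.x * q.x * q.y * (1 + p.y)
      + (p.y * q.x + p.x * (1 + p.y) * (1 + q.y)) * r.x) / q.x := by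
    obtain ⟨a, b, ha, hb⟩ := p
    obtain ⟨c, d, hc, hd⟩ := q
    obtain ⟨e, f, he, hf⟩ := r
    simp only [dA, dB]; field_simp; ring
  have hy : (dA (dB p q) r).y = r.y * (p.y * q.x + p.x * (1 + p.y) * (1 + q.y)) * r.x /
      ((p.y * q.x + p.x * (1 + p.y) * (1 + q.y)) * r.x
        + p.x * q.x * q.y * (1 + p.y) * (1 + r.y)) := by
    obtain ⟨a, b, ha, hb⟩ := p
    obtain ⟨c, d, hc, hd⟩ := q
    obtain ⟨e, f, he, hf⟩ := r
    simp only [dA, dB]; field_simp; ring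
  generalize dA (dB p q) r = Q at *
  obtain ⟨a, b, ha, hb⟩ := p
  obtain ⟨c, d, hc, hd⟩ := q
  obtain ⟨e, f, he, hf⟩ := r
  obtain ⟨u, v, hu, hv⟩ := Q
  simp only at hx hy
  simp only [dA, dB]
  generalize hJ : b * c + a * (1 + b) * (1 + d) = J at *
  have hJ0 : 0 < J := by rw [← hJ]; positivity
  generalize hM : J * e + a * c * d * (1 + b) * (1 + f) = M at *
  have hM0 : 0 < M := by rw [← hM]; positivity
  have h1 : 1 + v = (1 + f) * c * u / M := by
    rw [hx, hy]; field_simp; rw [← hM]; ring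
  have hu' := hu.ne'
  generalize hS : a * (1 + b) + b * c = S at *
  have hS0 : 0 < S := by rw [← hS]; positivity
  have h2 : u + S * (1 + v) = u * J * (e + c * (1 + f)) / M := by
    rw [h1]; field_simp; rw [← hM, ← hS, ← hJ]; ring
  rw [h2, hy]
  field_simp

lemma br2xR (p q r : Pt) : (dA (dB p (dA q r)) (dB q r)).x =
    r.y * r.x * (p.x * (1 + p.y) + p.y * q.x) / (r.x + q.x * (1 + r.y)) := by
  obtain ⟨a, b, ha, hb⟩ := p
  obtain ⟨c, d, hc, hd⟩ := q
  obtain ⟨e, f, he, hf⟩ := r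
  simp only [dA, dB]
  generalize hG : d * e + c * (1 + d) * (1 + f) = G at *
  have hG0 : 0 < G := by rw [← hG]; positivity
  generalize hT : c * (1 + d) + d * e = T at *
  have hT0 : 0 < T := by rw [← hT]; positivity
  have h1 : 1 + f * d * e / G = (1 + f) * T / G := by
    field_simp; rw [← hG, ← hT]; ring
  rw [h1]
  have h2 : a * (f * d * e / G) * T / (T + a * ((1 + f) * T / G)) =
      a * f * d * e / (G + a * (1 + f)) := by
    field_simp
  have h3 : (b * T + a * (1 + b) * ((1 + f) * T / G)) / T =
      (b * G + a * (1 + b) * (1 + f)) / G := by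
    field_simp
  have h4 : 1 + (b * G + a * (1 + b) * (1 + f)) / G = (1 + b) * (G + a * (1 + f)) / G := by
    field_simp; ring
  rw [h2, h3, h4]
  field_simp
  rw [← hG]; ring

lemma br2x (p q r : Pt) :
    (dB (dA p q) (dA (dB p q) r)).x = (dA (dB p (dA q r)) (dB q r)).x := by
  rw [br2xL, br2xR]

lemma br2 (p q r : Pt) : dB (dA p q) (dA (dB p q) r) = dA (dB p (dA q r)) (dB q r) := by
  apply Pt.ext'
  · exact br2x p q r
  · have h1 := br1 p q r
    have h3 := br3 p q r
    have e1 := dy (dA p q) (dA (dB p q) r)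
    have e2 := dy (dB p q) r
    have e3 := dy p q
    have f1 := dy (dB p (dA q r)) (dB q r)
    have f2 := dy p (dA q r)
    have f3 := dy q r
    rw [h1] at e1
    rw [h3] at e2
    generalize dB (dA p q) (dA (dB p q) r) = L at *
    generalize dA (dB p (dA q r)) (dB q r) = R at *
    generalize hA : dA p (dA q r) = A at *
    generalize hC : dB (dB p (dA q r)) (dB q r) = C at *
    have hAC : A.y * C.y ≠ 0 := (mul_pos A.hy C.hy).ne'
    have hm : (dA (dB p q) r).y ≠ 0 := (dA (dB p q) r).hy.ne'
    have hm' : (dA q r).y ≠ 0 := (dA q r).hy.ne'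
    have g1 : A.y * L.y * C.y = p.y * q.y * r.y := by
      apply mul_right_cancel₀ hm
      calc _ = (A.y * L.y) * ((dA (dB p q) r).y * C.y) := by ring
        _ = _ := by rw [e1, e2]; linear_combination (dA (dB p q) r).y * r.y * e3
    have g2 : A.y * R.y * C.y = p.y * q.y * r.y := by
      calc _ = A.y * (R.y * C.y) := by ring
        _ = _ := by rw [f1]; linear_combination (dB q r).y * f2 + p.y * f3
    apply mul_left_cancel₀ hAC
    linear_combination g1 - g2

/-- The Dynnikov-type action of the generator number `i`. -/
def act (i : ℕ) : Equiv.Perm (ℕ → Pt) where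
  toFun v := fun k => if k = i then dA (v i) (v (i+1)) else
    if k = i + 1 then dB (v i) (v (i+1)) else v k
  invFun v := fun k => if k = i then eA (v i) (v (i+1)) else
    if k = i + 1 then eB (v i) (v (i+1)) else v k
  left_inv v := by
    funext k
    by_cases h : k = i
    · subst h; simp [eA_d]
    · by_cases h' : k = i + 1
      · subst h'; simp [eB_d]
      · simp [h, h']
  right_inv v := by
    funext k
    by_cases h : k = i
    · subst h; simp [dA_e]
    · by_cases h' : k = i + 1
      · subst h'; simp [dB_e]
      · simp [h, h']

lemma act_apply (i : ℕ) (v : ℕ → Pt) (k : ℕ) :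
    act i v k = if k = i then dA (v i) (v (i+1)) else
      if k = i + 1 then dB (v i) (v (i+1)) else v k := rfl

lemma act_rel : ∀ r ∈ braidRels, FreeGroup.lift act r = 1 := by
  rintro r (⟨i, j, hij, rfl⟩ | ⟨i, rfl⟩)
  · simp only [map_mul, map_inv, FreeGroup.lift_apply_of]
    rw [mul_inv_eq_one, mul_inv_eq_iff_eq_mul]
    ext1 v
    funext k
    simp only [Equiv.Perm.mul_apply, act_apply]
    have e1 : i ≠ j := by omega
    have e2 : i ≠ j + 1 := by omega
    have e3 : i + 1 ≠ j := by omega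
    have e4 : i + 1 ≠ j + 1 := by omega
    by_cases h1 : k = i
    · subst h1; simp [*]
    by_cases h2 : k = i + 1
    · subst h2; simp [*]
    simp [h1, h2, e1, e2, e3, e4, e1.symm, e2.symm, e3.symm, e4.symm]
  · simp only [map_mul, map_inv, FreeGroup.lift_apply_of]
    rw [mul_inv_eq_one]
    ext1 v
    funext k
    simp only [Equiv.Perm.mul_apply, act_apply]
    have n1 : ∀ m : ℕ, m ≠ m + 1 + 1 := by intro m; omega
    have n2 : ∀ m : ℕ, m + 1 + 1 ≠ m := by intro m; omega
    by_cases h1 : k = i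
    · subst h1; simpa [n1, n2] using br1 _ _ _
    by_cases h2 : k = i + 1
    · subst h2; simpa [n1, n2] using br2 _ _ _
    by_cases h3 : k = i + 2
    · subst h3; simpa [n1, n2] using br3 _ _ _
    simp [h1, h2, h3]

/-- The action of the braid group. -/
def actHom : Binf →* Equiv.Perm (ℕ → Pt) := PresentedGroup.toGroup act_rel

lemma actHom_σ (i : ℕ) : actHom (σ i) = act i := PresentedGroup.toGroup.of act_rel

lemma Binf_induction {P : Binf → Prop} (h1 : P 1) (hs : ∀ i, P (σ i))
    (hm : ∀ a b, P a → P b → P (a * b)) (hi : ∀ a, P a → P a⁻¹) (b : Binf) : P b := by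
  have : b ∈ Subgroup.closure (Set.range (PresentedGroup.of (rels := braidRels))) := by
    rw [PresentedGroup.closure_range_of]; trivial
  induction this using Subgroup.closure_induction with
  | mem x hx => obtain ⟨i, rfl⟩ := hx; exact hs i
  | one => exact h1
  | mul a b _ _ ha hb => exact hm a b ha hb
  | inv a _ ha => exact hi a ha

lemma actHom_sh (b : Binf) : ∀ v, actHom (sh b) v 0 = v 0 := by
  induction b using Binf_induction with
  | h1 => simp
  | hs i => intro v; simp [actHom_σ, act_apply]
  | hm a b ha hb => intro v; simp [ha, hb]
  | hi a ha =>
    intro v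
    have := ha ((actHom (sh a))⁻¹ v)
    rw [← Equiv.Perm.mul_apply, mul_inv_cancel] at this
    rw [map_inv, map_inv, ← this]; rfl

/-- Semantic version of σ₁-positivity. -/
def SPos (g : Binf) : Prop := ∀ v, (v 0).x < (actHom g v 0).x

lemma SPos.mul {g h : Binf} (hg : SPos g) (hh : SPos h) : SPos (g * h) := by
  intro v
  rw [map_mul, Equiv.Perm.mul_apply]
  exact (hh v).trans (hg _)

lemma sPos_base (a b : Binf) : SPos (sh a * σ 0 * sh b) := by
  intro v
  simp only [map_mul, Equiv.Perm.mul_apply, actHom_sh, actHom_σ, act_apply, if_true, dA]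
  generalize v 0 = p
  generalize actHom (sh b) v _ = q
  have := mul_pos p.hx p.hy
  have := mul_pos p.hy q.hx
  linarith

lemma sPos_not_sh {g c : Binf} (hg : SPos g) : g ≠ sh c := by
  rintro rfl
  have := hg (fun _ => ⟨1, 1, one_pos, one_pos⟩)
  rw [actHom_sh] at this
  exact lt_irrefl _ this

/-! Braid relations -/

lemma σ_comm {i j : ℕ} (h : i + 2 ≤ j) : σ i * σ j = σ j * σ i := by
  have := mk_rel_eq_one (r := .of i * .of j * (.of i)⁻¹ * (.of j)⁻¹) (Or.inl ⟨i, j, h, rfl⟩)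
  simp only [map_mul, map_inv] at this
  rw [mul_inv_eq_one, mul_inv_eq_iff_eq_mul] at this
  exact this

lemma σ_braid (i : ℕ) : σ i * σ (i + 1) * σ i = σ (i + 1) * σ i * σ (i + 1) := by
  have := mk_rel_eq_one (Or.inr ⟨i, rfl⟩)
  simp only [map_mul, map_inv] at this
  rw [mul_inv_eq_one] at this
  exact this

lemma sh2_comm (b : Binf) : Commute (σ 0) (sh (sh b)) := by
  induction b using Binf_induction with
  | h1 => simp
  | hs i => simp only [sh_σ]; exact σ_comm (by omega)
  | hm a b ha hb => rw [map_mul, map_mul]; exact ha.mul_right hb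
  | hi a ha => rw [map_inv, map_inv]; exact ha.inv_right

lemma sc_ld (a b c : Binf) : sc a (sc b c) = sc (sc a b) (sc a c) := by
  have ha := (sh2_comm a).inv_right.eq
  have hb := (sh2_comm b).inv_right.eq
  have hc := (sh2_comm c).eq
  have h1 : σ 0 * σ 1 * σ 0 = σ 1 * σ 0 * σ 1 := σ_braid 0
  simp only [sc, map_mul, map_inv, sh_σ, zero_add, mul_inv_rev, inv_inv]
  generalize sh (sh a) = A at *
  generalize sh (sh b) = B at *
  generalize sh (sh c) = C at *
  calc a * (sh b * C * σ 1 * B⁻¹) * σ 0 * (sh a)⁻¹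
      = a * sh b * C * (σ 1 * σ 0 * σ 1) * (σ 1)⁻¹ * (σ 0)⁻¹ * (B⁻¹ * σ 0) * (sh a)⁻¹ := by group
    _ = a * sh b * C * (σ 0 * σ 1 * σ 0) * (σ 1)⁻¹ * (σ 0)⁻¹ * (σ 0 * B⁻¹) * (sh a)⁻¹ := by
        rw [h1, hb]
    _ = a * sh b * (C * σ 0) * σ 1 * A⁻¹ * (A * σ 0 * A⁻¹) * A * (σ 1)⁻¹ * B⁻¹ * (sh a)⁻¹ := by
        group
    _ = a * sh b * (σ 0 * C) * σ 1 * A⁻¹ * (σ 0) * A * (σ 1)⁻¹ * B⁻¹ * (sh a)⁻¹ := by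
        rw [hc, mul_assoc A, ha]; group
    _ = _ := by group

/-! injectivity of the shift -/

/-- δ n = σ₁ ⋯ σₙ -/
def dl : ℕ → Binf
  | 0 => 1
  | n + 1 => dl n * σ n

lemma dl_comm (n j : ℕ) (h : n + 1 ≤ j) : dl n * σ j = σ j * dl n := by
  induction n with
  | zero => simp [dl]
  | succ n ih =>
    rw [dl, mul_assoc, σ_comm (by omega), ← mul_assoc, ih (by omega), mul_assoc]

lemma dl_conj (n i : ℕ) (h : i + 1 < n) : dl n * σ i = σ (i + 1) * dl n := by
  induction n with
  | zero => omega
  | succ n ih =>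
    rcases Nat.lt_or_ge (i + 1) n with h' | h'
    · rw [dl, mul_assoc, ← σ_comm (by omega), ← mul_assoc, ih h', mul_assoc]
    · obtain rfl : n = i + 1 := by omega
      rw [dl, dl]
      calc dl i * σ i * σ (i+1) * σ i = dl i * (σ i * σ (i+1) * σ i) := by group
        _ = (dl i * σ (i+1)) * σ i * σ (i+1) := by rw [σ_braid]; group
        _ = _ := by rw [dl_comm i (i+1) le_rfl]; group

lemma dl_sh (b : Binf) : ∃ N, ∀ n, N ≤ n → dl n * b = sh b * dl n := by
  induction b using Binf_induction with
  | h1 => exact ⟨0, by simp⟩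
  | hs i => exact ⟨i + 2, fun n hn => by rw [sh_σ]; exact dl_conj n i (by omega)⟩
  | hm a b ha hb =>
    obtain ⟨N, hN⟩ := ha
    obtain ⟨M, hM⟩ := hb
    refine ⟨max N M, fun n hn => ?_⟩
    rw [← mul_assoc, hN n (by omega), mul_assoc, hM n (by omega), map_mul, mul_assoc]
  | hi a ha =>
    obtain ⟨N, hN⟩ := ha
    refine ⟨N, fun n hn => ?_⟩
    rw [map_inv, mul_inv_eq_iff_eq_mul, mul_assoc, hN n hn, inv_mul_cancel_left]

lemma sh_inj : Function.Injective sh := by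
  rw [injective_iff_map_eq_one]
  intro b hb
  obtain ⟨N, hN⟩ := dl_sh b
  have := hN N le_rfl
  rw [hb, one_mul] at this
  exact mul_eq_left.mp this

/-! LD terms -/

/-- One-generator terms. -/
inductive Tm where
  | x : Tm
  | op : Tm → Tm → Tm

open Tm Relation

/-- One-step LD-expansion. -/
inductive Step : Tm → Tm → Prop
  | dist (a b c) : Step (op a (op b c)) (op (op a b) (op a c))
  | left {a a'} (b) : Step a a' → Step (op a b) (op a' b)
  | right (a) {b d} : Step b d → Step (op a b) (op a d)

/-- LD-expansion. -/
abbrev Ex : Tm → Tm → Prop := ReflTransGen Step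

lemma Ex.op {a c b d : Tm} (h : Ex a c) (hb : Ex b d) : Ex (op a b) (op c d) :=
  (h.lift (fun t => Tm.op t b) (fun _ _ s => Step.left b s)).trans
    (hb.lift (fun t => Tm.op c t) (fun _ _ s => Step.right c s))

/-- Distribute `t` everywhere in a term. -/
def star (t : Tm) : Tm → Tm
  | x => op t x
  | op u v => op (star t u) (star t v)

/-- Full development. -/
def dev : Tm → Tm
  | x => x
  | op u v => star (dev u) (dev v)

lemma ex_star (t u : Tm) : Ex (op t u) (star t u) := by
  induction u with
  | x => exact .refl
  | op u v hu hv => exact .head (.dist _ _ _) (Ex.op hu hv)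

lemma star_left {t t' : Tm} (h : Ex t t') (u : Tm) : Ex (star t u) (star t' u) := by
  induction u with
  | x => exact Ex.op h .refl
  | op u v hu hv => exact Ex.op hu hv

lemma star_step (t : Tm) {u u' : Tm} (h : Step u u') : Step (star t u) (star t u') := by
  induction h with
  | dist a b c => exact .dist _ _ _
  | left b _ ih => exact .left _ ih
  | right a _ ih => exact .right _ ih

lemma star_right (t : Tm) {u u' : Tm} (h : Ex u u') : Ex (star t u) (star t u') :=
  h.lift _ (fun _ _ s => star_step t s)

lemma ex_dev (t : Tm) : Ex t (dev t) := by
  induction t with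
  | x => exact .refl
  | op u v hu hv => exact (Ex.op hu hv).trans (ex_star _ _)

lemma step_dev {t t' : Tm} (h : Step t t') : Ex t' (dev t) := by
  induction h with
  | dist a b c =>
    have h1 : Ex (op (op a b) (op a c)) (star (dev a) (op (dev b) (dev c))) :=
      Ex.op (ex_dev (op a b)) (ex_dev (op a c))
    exact h1.trans (star_right _ (ex_star _ _))
  | left b _ ih => exact (Ex.op ih (ex_dev b)).trans (ex_star _ _)
  | right a _ ih => exact (Ex.op (ex_dev a) ih).trans (ex_star _ _)

lemma star_ld (a b c : Tm) : Ex (star a (star b c)) (star (star a b) (star a c)) := by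
  induction c with
  | x => exact ex_star _ _
  | op u v hu hv => exact Ex.op hu hv

lemma dev_step {t t' : Tm} (h : Step t t') : Ex (dev t) (dev t') := by
  induction h with
  | dist a b c => exact star_ld _ _ _
  | left b _ ih => exact star_left ih _
  | right a _ ih => exact star_right _ ih

lemma dev_ex {t t' : Tm} (h : Ex t t') : Ex (dev t) (dev t') := by
  induction h with
  | refl => exact .refl
  | tail _ s ih => exact ih.trans (dev_step s)

lemma confl {t t1 : Tm} (h1 : Ex t t1) : ∀ {t2}, Ex t t2 → ∃ s, Ex t1 s ∧ Ex t2 s := by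
  induction h1 using ReflTransGen.head_induction_on with
  | refl => intro t2 h; exact ⟨t2, h, .refl⟩
  | head s _ ih =>
    intro t2 h
    obtain ⟨w, hw, hv⟩ := ih ((step_dev s).trans (dev_ex h))
    exact ⟨w, hw, (ex_dev t2).trans hv⟩

/-- LD-equivalence. -/
def Eqv (a b : Tm) : Prop := ∃ s, Ex a s ∧ Ex b s

lemma Eqv.symm {a b : Tm} : Eqv a b → Eqv b a := fun ⟨s, h, h'⟩ => ⟨s, h', h⟩

lemma Eqv.trans {a b c : Tm} : Eqv a b → Eqv b c → Eqv a c := by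
  rintro ⟨s, h, h'⟩ ⟨t, k, k'⟩
  obtain ⟨w, hw, hw'⟩ := confl h' k
  exact ⟨w, h.trans hw, k'.trans hw'⟩

lemma Eqv.op {a a' b b' : Tm} : Eqv a a' → Eqv b b' → Eqv (op a b) (op a' b') := by
  rintro ⟨s, h, h'⟩ ⟨t, k, k'⟩
  exact ⟨_, Ex.op h k, Ex.op h' k'⟩

lemma Eqv.refl (a : Tm) : Eqv a a := ⟨a, .refl, .refl⟩

/-- Right powers. -/
def pw : ℕ → Tm
  | 0 => x
  | n + 1 => op x (pw n)

lemma absorb (t : Tm) : ∃ N, ∀ n, N ≤ n → Eqv (op t (pw n)) (pw (n + 1)) := by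
  induction t with
  | x => exact ⟨0, fun n _ => Eqv.refl _⟩
  | op a b ha hb =>
    obtain ⟨N, hN⟩ := ha
    obtain ⟨M, hM⟩ := hb
    refine ⟨N + M + 1, fun n hn => ?_⟩
    obtain ⟨m, rfl⟩ : ∃ m, n = m + 1 := ⟨n - 1, by omega⟩
    have e1 := (Eqv.refl (Tm.op a b)).op (hN m (by omega)).symm
    have e2 : Eqv (Tm.op (Tm.op a b) (Tm.op a (pw m))) (Tm.op a (Tm.op b (pw m))) :=
      ⟨_, .refl, .single (.dist _ _ _)⟩
    have e3 := (Eqv.refl a).op (hM m (by omega))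
    exact ((e1.trans e2).trans e3).trans (hN (m + 1) (by omega))

/-- Iterated left subterms. -/
inductive LS : Tm → Tm → Prop
  | refl (t) : LS t t
  | left {p a} (b) : LS p a → LS p (op a b)

lemma LS.step {t t' : Tm} (h : Step t t') : ∀ {p}, LS p t → ∃ p', LS p' t' ∧ Ex p p' := by
  induction h with
  | dist a b c =>
    intro p hp
    cases hp with
    | refl => exact ⟨_, .refl _, .single (.dist _ _ _)⟩
    | left _ hp => exact ⟨p, .left _ (.left _ hp), .refl⟩
  | left b s ih =>
    intro p hp
    cases hp with
    | refl => exact ⟨_, .refl _, .single (.left _ s)⟩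
    | left _ hp =>
      obtain ⟨p', h, h'⟩ := ih hp
      exact ⟨p', .left _ h, h'⟩
  | right a s ih =>
    intro p hp
    cases hp with
    | refl => exact ⟨_, .refl _, .single (.right _ s)⟩
    | left _ hp => exact ⟨p, .left _ hp, .refl⟩

lemma LS.ex {t t' : Tm} (h : Ex t t') {p} (hp : LS p t) : ∃ p', LS p' t' ∧ Ex p p' := by
  induction h with
  | refl => exact ⟨p, hp, .refl⟩
  | tail _ s ih =>
    obtain ⟨q, h1, h2⟩ := ih
    obtain ⟨r, h3, h4⟩ := LS.step s h1
    exact ⟨r, h3, h2.trans h4⟩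

lemma LS.total {p q t : Tm} (hp : LS p t) (hq : LS q t) : LS p q ∨ LS q p := by
  induction hp with
  | refl => exact .inr hq
  | left b h ih =>
    cases hq with
    | refl => exact .inl (.left _ h)
    | left _ hq => exact ih hq

/-- Evaluation in the braid group. -/
def ev : Tm → Binf
  | x => 1
  | op a b => sc (ev a) (ev b)

lemma ev_step {t t' : Tm} (h : Step t t') : ev t = ev t' := by
  induction h with
  | dist a b c => exact sc_ld _ _ _
  | left b _ ih => simp only [ev, ih]
  | right a _ ih => simp only [ev, ih]

lemma ev_ex {t t' : Tm} (h : Ex t t') : ev t = ev t' := by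
  induction h with
  | refl => rfl
  | tail _ s ih => exact ih.trans (ev_step s)

lemma ev_LS {p t : Tm} (h : LS p t) : ev p = ev t ∨ SPos ((ev p)⁻¹ * ev t) := by
  induction h with
  | refl => exact .inl rfl
  | @left a b h ih =>
    right
    have key : SPos ((ev a)⁻¹ * ev (Tm.op a b)) := by
      have : (ev a)⁻¹ * ev (Tm.op a b) = sh (ev b) * σ 0 * sh (ev a)⁻¹ := by
        simp only [ev, sc, map_inv]; group
      rw [this]; exact sPos_base _ _
    rcases ih with ih | ih
    · rw [ih]; exact key
    · have := ih.mul key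
      rwa [mul_assoc, mul_inv_cancel_left] at this

lemma special_ev {a : Binf} (h : a ∈ Special) : ∃ t, ev t = a := by
  refine h (fun a => ∃ t, ev t = a) ⟨x, rfl⟩ ?_
  rintro _ _ ⟨s, rfl⟩ ⟨t, rfl⟩
  exact ⟨op s t, rfl⟩

lemma ev_compare (s t : Tm) :
    ev s = ev t ∨ SPos ((ev s)⁻¹ * ev t) ∨ SPos ((ev t)⁻¹ * ev s) := by
  obtain ⟨N, hN⟩ := absorb s
  obtain ⟨M, hM⟩ := absorb t
  obtain ⟨w, h1, h2⟩ := (hN (N + M) (by omega)).trans (hM (N + M) (by omega)).symm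
  obtain ⟨p, hp, hp'⟩ := LS.ex h1 (.left _ (.refl s))
  obtain ⟨q, hq, hq'⟩ := LS.ex h2 (.left _ (.refl t))
  rw [ev_ex hp', ev_ex hq']
  rcases LS.total hp hq with h | h
  · rcases ev_LS h with h | h
    · exact .inl h
    · exact .inr (.inl h)
  · rcases ev_LS h with h | h
    · exact .inl h.symm
    · exact .inr (.inr h)

lemma special_sep {a b u v : Binf} (ha : a ∈ Special) (hb : b ∈ Special)
    (h : a * sh u = b * sh v) : a = b := by
  obtain ⟨s, rfl⟩ := special_ev ha
  obtain ⟨t, rfl⟩ := special_ev hb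
  rcases ev_compare s t with h' | h' | h'
  · exact h'
  · refine absurd ?_ (sPos_not_sh (c := u * v⁻¹) h')
    rw [map_mul, map_inv, eq_mul_inv_iff_mul_eq, mul_assoc, ← h, inv_mul_cancel_left]
  · refine absurd ?_ (sPos_not_sh (c := v * u⁻¹) h')
    rw [map_mul, map_inv, eq_mul_inv_iff_mul_eq, mul_assoc, h, inv_mul_cancel_left]

lemma shProd_inj : ∀ (l m : List Binf), l.length = m.length → (∀ y ∈ l, y ∈ Special) →
    (∀ y ∈ m, y ∈ Special) → shProd l = shProd m → l = m
  | [], [], _, _, _, _ => rfl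
  | [], _ :: _, h, _, _, _ => by simp at h
  | _ :: _, [], h, _, _, _ => by simp at h
  | a :: l, b :: m, hlen, hl, hm, h => by
    simp only [shProd] at h
    have hab := special_sep (hl a (by simp)) (hm b (by simp)) h
    subst hab
    have := sh_inj (mul_left_cancel h)
    rw [shProd_inj l m (by simpa using hlen) (fun y hy => hl y (by simp [hy]))
      (fun y hy => hm y (by simp [hy])) this]

lemma special_one : (1 : Binf) ∈ Special := fun _ h _ => h

lemma special_sc {a b : Binf} (ha : a ∈ Special) (hb : b ∈ Special) : sc a b ∈ Special :=
  fun P h1 h2 => h2 a b (ha P h1 h2) (hb P h1 h2)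

lemma shProd_mul_σ : ∀ (i : ℕ) (l : List Binf), i + 2 ≤ l.length → (∀ y ∈ l, y ∈ Special) →
    ∃ m : List Binf, m.length = l.length ∧ (∀ y ∈ m, y ∈ Special) ∧
      shProd m = shProd l * σ i
  | _, [], h, _ => by simp at h
  | 0, [_], h, _ => by simp at h
  | 0, a :: b :: l, _, hl => by
    refine ⟨sc a b :: a :: l, by simp, ?_, ?_⟩
    · intro y hy
      simp only [List.mem_cons] at hy
      rcases hy with rfl | rfl | hy
      · exact special_sc (hl a (by simp)) (hl b (by simp))
      · exact hl y (by simp)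
      · exact hl y (by simp [hy])
    · simp only [shProd, sc, map_mul]
      have := (sh2_comm (shProd l)).eq
      simp only [mul_assoc, inv_mul_cancel_left, this]
  | i + 1, a :: l, h, hl => by
    obtain ⟨m, h1, h2, h3⟩ := shProd_mul_σ i l (by simp at h; omega)
      (fun y hy => hl y (by simp [hy]))
    refine ⟨a :: m, by simp [h1], ?_, ?_⟩
    · intro y hy
      simp only [List.mem_cons] at hy
      rcases hy with rfl | hy
      · exact hl y (by simp)
      · exact h2 y hy
    · simp only [shProd, h3, map_mul, sh_σ, mul_assoc]

lemma shProd_ones (n : ℕ) : shProd (List.replicate n 1) = 1 := by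
  induction n with
  | zero => rfl
  | succ n ih => simp [List.replicate_succ, shProd, ih]

lemma special_exists (n : ℕ) (β : Binf) (hβ : β ∈ BfinPos n) :
    ∃ l : List Binf, l.length = n ∧ (∀ y ∈ l, y ∈ Special) ∧ shProd l = β := by
  unfold BfinPos at hβ
  induction hβ using Submonoid.closure_induction_right with
  | one =>
    refine ⟨List.replicate n 1, by simp, ?_, shProd_ones n⟩
    intro y hy
    rw [List.eq_of_mem_replicate hy]
    exact special_one
  | mul_right b hb c hc ih =>
    obtain ⟨i, hi, rfl⟩ := hc
    obtain ⟨l, h1, h2, h3⟩ := ih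
    obtain ⟨m, k1, k2, k3⟩ := shProd_mul_σ i l (by rw [h1]; exact hi) h2
    exact ⟨m, k1.trans h1, k2, by rw [k3, h3]⟩

/-- special decomposition. Every positive braid `β ∈ B_n⁺`
admits a unique decomposition `β = β₁ · sh β₂ ⋯ sh^{n-1} βₙ` with all `βᵢ`
special. -/
theorem special_decomposition (n : ℕ) (hn : 1 ≤ n) (β : Binf)
    (hβ : β ∈ BfinPos n) :
    ∃! l : List Binf,
      l.length = n ∧ (∀ x ∈ l, x ∈ Special) ∧ β = shProd l := by
  obtain ⟨l, h1, h2, h3⟩ := special_exists n β hβ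
  refine ⟨l, ⟨h1, h2, h3.symm⟩, ?_⟩
  rintro m ⟨k1, k2, k3⟩
  exact shProd_inj m l (k1.trans h1.symm) k2 h2 (k3.symm.trans h3.symm)
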